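/- arXiv:2308.09535 — 2 statements merged into one kernel-verified Lean document; each statement's English description precedes it below -/
import Mathlib

section
/- (Lemma 1(i)) Under the balanced-design assumption, (1 − δ) K_Z ≤ Σ_{i,j} A_ij² ≤ K_Z; in particular there exist constants 0 < c < C depending only on δ such that c < (1/K_Z) Σ_{i,j} A_ij² < C. -/
open Matrix Finset

/-- The residual-maker (annihilator) projection `M_W = I - W (W'W)⁻¹ W'`. -/
noncomputable def annihilator {N KW : ℕ} (W : Matrix (Fin N) (Fin KW) ℝ) :
    Matrix (Fin N) (Fin N) ℝ :=
  1 - W * (Wᵀ * W)⁻¹ * Wᵀ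

/-- The balanced-design assumption for the matrices `W`, `P⊥`, the vector `θ` and
the constant `δ`: `W` has full column rank, `P⊥` is a symmetric idempotent matrix of rank
`K_Z` with `M_W P⊥ = P⊥ M_W = P⊥`, `θ` solves `∑_j (M_W)_ij² θ_j = (P⊥)_ii` with `θ_i ≥ 0`,
`min_i (M_W)_ii > 1/2`, and `(P⊥)_ii/(M_W)_ii² ≤ δ` for all `i`. -/
structure BalancedDesign {N KW : ℕ} (KZ : ℕ) (W : Matrix (Fin N) (Fin KW) ℝ)
    (Pperp : Matrix (Fin N) (Fin N) ℝ) (θ : Fin N → ℝ) (δ : ℝ) : Prop where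
  hWrank : W.rank = KW
  hPsymm : Pperp.IsSymm
  hPidem : Pperp * Pperp = Pperp
  hPrank : Pperp.rank = KZ
  hMP : annihilator W * Pperp = Pperp
  hPM : Pperp * annihilator W = Pperp
  hθ : ∀ i, ∑ j, (annihilator W i j) ^ 2 * θ j = Pperp i i
  hθnn : ∀ i, 0 ≤ θ i
  hMdiag : ∀ i, 1 / 2 < annihilator W i i
  hδ : ∀ i, Pperp i i / (annihilator W i i) ^ 2 ≤ δ

/-- The diagonal-free matrix `A = P⊥ − M_W D_θ M_W`. -/
noncomputable def Amat {N KW : ℕ} (W : Matrix (Fin N) (Fin KW) ℝ)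
    (Pperp : Matrix (Fin N) (Fin N) ℝ) (θ : Fin N → ℝ) : Matrix (Fin N) (Fin N) ℝ :=
  Pperp - annihilator W * Matrix.diagonal θ * annihilator W

/-!
Write `M = M_W`, `P = P⊥` and `B = M D_θ M`. Since `M P M = P`, the matrix `A = P - B` satisfies
`M A M = A`, so its Frobenius inner product with `B` is `∑ i, A i i * θ i`, which is `0`: the
equations for `θ` say exactly that `A` has zero diagonal. By Pythagoras
`‖A‖² = ‖P‖² - ‖B‖²`, where `‖P‖² = tr P = K_Z` and `‖B‖² = ⟨P, B⟩ = ∑ i, P i i * θ i`.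
The upper bound is immediate. For the lower bound, `(M i i)² * θ i` is one of the nonnegative terms
of `∑ j, (M i j)² * θ j = P i i ≤ δ * (M i i)²`, which gives `P i i * θ i ≤ δ * P i i`.
-/

section Projections

variable {m n : Type*} [Fintype m] [Fintype n]

theorem trace_eq_rank_of_isIdempotentElem {K : Type*} [Field K] {P : Matrix n n K}
    (hP : IsIdempotentElem P) : P.trace = (P.rank : K) := by
  classical
  have hP_lin : IsIdempotentElem P.toLin' := by
    rw [IsIdempotentElem, Module.End.mul_eq_comp, ← toLin'_mul, hP.eq]
  rw [← trace_toLin'_eq, (LinearMap.IsIdempotentElem.isProj_range _ hP_lin).trace, rank,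
    toLin'_apply']

theorem sum_sq_eq_trace_of_isSymm_of_isIdempotentElem {R : Type*} [CommSemiring R]
    {P : Matrix n n R} (hP_symm : P.IsSymm) (hP : IsIdempotentElem P) :
    ∑ i, ∑ j, P i j ^ 2 = P.trace :=
  calc ∑ i, ∑ j, P i j ^ 2 = (P * Pᵀ).trace := by
        simp only [sq]
        exact sum_hadamard_eq P P
    _ = P.trace := by rw [hP_symm.eq, hP.eq]

variable [DecidableEq n]

theorem isUnit_of_rank_eq_card {K : Type*} [Field K] {G : Matrix n n K}
    (hG : G.rank = Fintype.card n) : IsUnit G := by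
  rw [← linearIndependent_cols_iff_isUnit, linearIndependent_iff_card_eq_finrank_span, ← hG,
    rank_eq_finrank_span_cols, Set.finrank]

theorem isIdempotentElem_mul_inv_mul {R : Type*} [CommRing R] {A : Matrix m n R}
    {B : Matrix n m R} (hBA : IsUnit (B * A)) : IsIdempotentElem (A * (B * A)⁻¹ * B) := by
  have hBA_inv : (B * A)⁻¹ * (B * A) = 1 :=
    nonsing_inv_mul _ ((isUnit_iff_isUnit_det _).1 hBA)
  rw [IsIdempotentElem]
  calc A * (B * A)⁻¹ * B * (A * (B * A)⁻¹ * B)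
      = A * ((B * A)⁻¹ * (B * A)) * (B * A)⁻¹ * B := by simp only [Matrix.mul_assoc]
    _ = A * (B * A)⁻¹ * B := by rw [hBA_inv, Matrix.mul_one]

end Projections

section Annihilator

variable {N KW : ℕ} {W : Matrix (Fin N) (Fin KW) ℝ}

theorem isSymm_annihilator : (annihilator W).IsSymm := by
  have hWW : ((Wᵀ * W)⁻¹)ᵀ = (Wᵀ * W)⁻¹ := by
    rw [transpose_nonsing_inv, transpose_mul, transpose_transpose]
  rw [IsSymm, annihilator, transpose_sub, transpose_one, transpose_mul, transpose_mul,
    transpose_transpose, hWW, Matrix.mul_assoc]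

theorem isIdempotentElem_annihilator (hW : W.rank = KW) : IsIdempotentElem (annihilator W) := by
  have hWW : IsUnit (Wᵀ * W) :=
    isUnit_of_rank_eq_card (by rw [rank_transpose_mul_self, hW, Fintype.card_fin])
  exact (isIdempotentElem_mul_inv_mul hWW).one_sub

end Annihilator

section Frobenius

variable {R : Type*} [CommSemiring R] {l m n : Type*} [Fintype l] [Fintype m] [Fintype n]
  [DecidableEq n]

theorem sum_mul_mul_diagonal_mul (X : Matrix l m R) (A : Matrix l n R) (B : Matrix n m R)
    (θ : n → R) :
    ∑ i, ∑ j, X i j * (A * diagonal θ * B) i j = ∑ i, (Aᵀ * X * Bᵀ) i i * θ i :=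
  calc ∑ i, ∑ j, X i j * (A * diagonal θ * B) i j
      = (X * (A * diagonal θ * B)ᵀ).trace := sum_hadamard_eq X (A * diagonal θ * B)
    _ = (X * Bᵀ * diagonal θ * Aᵀ).trace := by
      rw [transpose_mul, transpose_mul, diagonal_transpose]
      simp only [Matrix.mul_assoc]
    _ = (Aᵀ * X * Bᵀ * diagonal θ).trace := by
      rw [trace_mul_comm]
      simp only [Matrix.mul_assoc]
    _ = ∑ i, (Aᵀ * X * Bᵀ) i i * θ i := by
      simp only [trace, diag_apply, mul_diagonal]

variable {M : Matrix n n R}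

theorem mul_diagonal_mul_apply_self (hM : M.IsSymm) (θ : n → R) (i : n) :
    (M * diagonal θ * M) i i = ∑ j, M i j ^ 2 * θ j := by
  rw [mul_apply]
  refine sum_congr rfl fun j _ ↦ ?_
  rw [mul_diagonal, hM.apply]
  ring

theorem sum_sq_mul_diagonal_mul (hM_symm : M.IsSymm) (hM : IsIdempotentElem M) (θ : n → R) :
    ∑ i, ∑ j, (M * diagonal θ * M) i j ^ 2 = ∑ i, (∑ j, M i j ^ 2 * θ j) * θ i := by
  have hMBM : M * (M * diagonal θ * M) * M = M * diagonal θ * M := by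
    rw [← Matrix.mul_assoc, ← Matrix.mul_assoc, hM.eq, Matrix.mul_assoc, hM.eq]
  simp only [← mul_diagonal_mul_apply_self hM_symm]
  simp only [sq]
  rw [sum_mul_mul_diagonal_mul, hM_symm.eq, hMBM]

theorem sum_sq_sub_mul_diagonal_mul {R : Type*} [CommRing R] {M P : Matrix n n R} {θ : n → R}
    (hM_symm : M.IsSymm) (hM : IsIdempotentElem M) (hMPM : M * P * M = P)
    (hθ : ∀ i, ∑ j, M i j ^ 2 * θ j = P i i) :
    ∑ i, ∑ j, (P - M * diagonal θ * M) i j ^ 2 =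
      ∑ i, ∑ j, P i j ^ 2 - ∑ i, P i i * θ i := by
  set B := M * diagonal θ * M with hB
  have h_cross : ∑ i, ∑ j, P i j * B i j = ∑ i, P i i * θ i := by
    rw [hB, sum_mul_mul_diagonal_mul, hM_symm.eq, hMPM]
  have h_norm : ∑ i, ∑ j, B i j ^ 2 = ∑ i, P i i * θ i := by
    simp only [hB, sum_sq_mul_diagonal_mul hM_symm hM, hθ]
  calc ∑ i, ∑ j, (P - B) i j ^ 2
      = ∑ i, ∑ j, P i j ^ 2 - 2 * ∑ i, ∑ j, P i j * B i j + ∑ i, ∑ j, B i j ^ 2 := by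
        simp only [Matrix.sub_apply, sub_sq, sum_add_distrib, sum_sub_distrib, mul_sum, mul_assoc]
    _ = ∑ i, ∑ j, P i j ^ 2 - ∑ i, P i i * θ i := by
        rw [h_cross, h_norm]
        ring

end Frobenius

theorem sum_mul_le_mul_sum_of_le_mul_diag {K n : Type*} [CommSemiring K] [LinearOrder K]
    [IsStrictOrderedRing K] [Fintype n] {w : n → n → K} {p θ : n → K} {δ : K}
    (hw : ∀ i j, 0 ≤ w i j) (hθ : ∀ i, 0 ≤ θ i) (hp : ∀ i, ∑ j, w i j * θ j = p i)
    (hδ : ∀ i, p i ≤ δ * w i i) : ∑ i, p i * θ i ≤ δ * ∑ i, p i := by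
  rw [mul_sum]
  refine sum_le_sum fun i _ ↦ ?_
  have h_terms : ∀ j ∈ univ, 0 ≤ w i j * θ j := fun j _ ↦ mul_nonneg (hw i j) (hθ j)
  have h_diag : w i i * θ i ≤ p i := hp i ▸ single_le_sum h_terms (mem_univ i)
  have hp_nonneg : 0 ≤ p i := hp i ▸ sum_nonneg h_terms
  rcases hp_nonneg.eq_or_lt with hp_zero | hp_pos
  · simp [← hp_zero]
  · have hδ_pos : 0 < δ := pos_of_mul_pos_left (hp_pos.trans_le (hδ i)) (hw i i)
    calc p i * θ i ≤ δ * w i i * θ i := mul_le_mul_of_nonneg_right (hδ i) (hθ i)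
      _ = δ * (w i i * θ i) := mul_assoc _ _ _
      _ ≤ δ * p i := mul_le_mul_of_nonneg_left h_diag hδ_pos.le

section Bounds

variable {K n : Type*} [Field K] [Fintype n] [DecidableEq n] {M P : Matrix n n K} {θ : n → K}

theorem sum_sq_sub_mul_diagonal_mul_eq_rank_sub (hM_symm : M.IsSymm) (hM : IsIdempotentElem M)
    (hP_symm : P.IsSymm) (hP : IsIdempotentElem P) (hMP : M * P = P)
    (hθ : ∀ i, ∑ j, M i j ^ 2 * θ j = P i i) :
    ∑ i, ∑ j, (P - M * diagonal θ * M) i j ^ 2 = P.rank - ∑ i, P i i * θ i := by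
  have hPM : P * M = P := by
    rw [← hM_symm.eq, ← hP_symm.eq, ← transpose_mul, hMP]
  rw [sum_sq_sub_mul_diagonal_mul hM_symm hM (by rw [hMP, hPM]) hθ,
    sum_sq_eq_trace_of_isSymm_of_isIdempotentElem hP_symm hP,
    trace_eq_rank_of_isIdempotentElem hP]

variable [LinearOrder K] [IsStrictOrderedRing K]

theorem sum_sq_sub_mul_diagonal_mul_le_rank (hM_symm : M.IsSymm) (hM : IsIdempotentElem M)
    (hP_symm : P.IsSymm) (hP : IsIdempotentElem P) (hMP : M * P = P)
    (hθ : ∀ i, ∑ j, M i j ^ 2 * θ j = P i i) :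
    ∑ i, ∑ j, (P - M * diagonal θ * M) i j ^ 2 ≤ P.rank := by
  have h_norm_sq : ∑ i, P i i * θ i = ∑ i, ∑ j, (M * diagonal θ * M) i j ^ 2 := by
    simp only [sum_sq_mul_diagonal_mul hM_symm hM, hθ]
  rw [sum_sq_sub_mul_diagonal_mul_eq_rank_sub hM_symm hM hP_symm hP hMP hθ, h_norm_sq]
  exact sub_le_self _ (sum_nonneg fun i _ ↦ sum_nonneg fun j _ ↦ sq_nonneg _)

theorem mul_rank_le_sum_sq_sub_mul_diagonal_mul {δ : K} (hM_symm : M.IsSymm)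
    (hM : IsIdempotentElem M) (hP_symm : P.IsSymm) (hP : IsIdempotentElem P) (hMP : M * P = P)
    (hθ : ∀ i, ∑ j, M i j ^ 2 * θ j = P i i) (hθ_nonneg : ∀ i, 0 ≤ θ i)
    (hPδ : ∀ i, P i i ≤ δ * M i i ^ 2) :
    (1 - δ) * P.rank ≤ ∑ i, ∑ j, (P - M * diagonal θ * M) i j ^ 2 := by
  have h_deficit : ∑ i, P i i * θ i ≤ δ * P.rank :=
    calc ∑ i, P i i * θ i ≤ δ * P.trace :=
          sum_mul_le_mul_sum_of_le_mul_diag (fun _ _ ↦ sq_nonneg _) hθ_nonneg hθ hPδ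
      _ = δ * P.rank := by rw [trace_eq_rank_of_isIdempotentElem hP]
  rw [sum_sq_sub_mul_diagonal_mul_eq_rank_sub hM_symm hM hP_symm hP hMP hθ]
  linarith

end Bounds

theorem lemma1_part_i_general {K : Type*} [Field K] [LinearOrder K]
    [IsStrictOrderedRing K] (δ : K) (hδ : δ < 1) :
    ∃ c C : K, 0 < c ∧ c < C ∧
      ∀ {n : Type*} [Fintype n] [DecidableEq n] {M P : Matrix n n K} {θ : n → K},
        M.IsSymm → IsIdempotentElem M → P.IsSymm → IsIdempotentElem P → M * P = P →
        (∀ i, ∑ j, M i j ^ 2 * θ j = P i i) → (∀ i, 0 ≤ θ i) →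
        (∀ i, P i i ≤ δ * M i i ^ 2) →
        ((1 - δ) * (P.rank : K) ≤ ∑ i, ∑ j, (P - M * diagonal θ * M) i j ^ 2 ∧
          ∑ i, ∑ j, (P - M * diagonal θ * M) i j ^ 2 ≤ (P.rank : K)) ∧
        (0 < P.rank →
          c < (1 / (P.rank : K)) * ∑ i, ∑ j, (P - M * diagonal θ * M) i j ^ 2 ∧
          (1 / (P.rank : K)) * ∑ i, ∑ j, (P - M * diagonal θ * M) i j ^ 2 < C) := by
  refine ⟨(1 - δ) / 2, 2 - δ, by linarith, by linarith, ?_⟩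
  intro n _ _ M P θ hM_symm hM hP_symm hP hMP hθ hθ_nonneg hPδ
  have h_lower := mul_rank_le_sum_sq_sub_mul_diagonal_mul hM_symm hM hP_symm hP hMP hθ hθ_nonneg hPδ
  have h_upper := sum_sq_sub_mul_diagonal_mul_le_rank hM_symm hM hP_symm hP hMP hθ
  refine ⟨⟨h_lower, h_upper⟩, fun h_rank ↦ ?_⟩
  have h_rank_pos : (0 : K) < P.rank := Nat.cast_pos.2 h_rank
  rw [one_div_mul_eq_div]
  constructor
  · exact (half_lt_self (sub_pos.2 hδ)).trans_le ((le_div_iff₀ h_rank_pos).2 h_lower)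
  · exact (div_le_one_of_le₀ h_upper h_rank_pos.le).trans_lt (by linarith)

theorem BalancedDesign.diag_le {N KW KZ : ℕ} {W : Matrix (Fin N) (Fin KW) ℝ}
    {Pperp : Matrix (Fin N) (Fin N) ℝ} {θ : Fin N → ℝ} {δ : ℝ}
    (h : BalancedDesign KZ W Pperp θ δ) (i : Fin N) :
    Pperp i i ≤ δ * annihilator W i i ^ 2 :=
  (div_le_iff₀ (pow_pos (one_half_pos.trans (h.hMdiag i)) 2)).1 (h.hδ i)

/-- Lemma 1(i): Under the balanced-design assumption,
`(1 − δ) K_Z ≤ ∑_{i,j} A_ij² ≤ K_Z`; in particular there exist constants `0 < c < C`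
depending only on `δ` such that `c < (1/K_Z) ∑_{i,j} A_ij² < C`. -/
theorem lemma1_part_i (δ : ℝ) (hδ : δ < 1) :
    ∃ c C : ℝ, 0 < c ∧ c < C ∧
      ∀ (N KW KZ : ℕ) (W : Matrix (Fin N) (Fin KW) ℝ)
        (Pperp : Matrix (Fin N) (Fin N) ℝ) (θ : Fin N → ℝ),
        BalancedDesign KZ W Pperp θ δ →
        ((1 - δ) * (KZ : ℝ) ≤ ∑ i, ∑ j, (Amat W Pperp θ i j) ^ 2 ∧
          ∑ i, ∑ j, (Amat W Pperp θ i j) ^ 2 ≤ (KZ : ℝ)) ∧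
        (0 < KZ →
          c < (1 / (KZ : ℝ)) * ∑ i, ∑ j, (Amat W Pperp θ i j) ^ 2 ∧
          (1 / (KZ : ℝ)) * ∑ i, ∑ j, (Amat W Pperp θ i j) ^ 2 < C) := by
  obtain ⟨c, C, hc, hcC, h_bounds⟩ := lemma1_part_i_general δ hδ
  exact ⟨c, C, hc, hcC, fun N KW KZ W Pperp θ h ↦ h.hPrank ▸ h_bounds isSymm_annihilator
    (isIdempotentElem_annihilator h.hWrank) h.hPsymm h.hPidem h.hMP h.hθ h.hθnn h.diag_le⟩
end

section
/- Let M be a symmetric idempotent N×N real matrix with M_ii > 1/2 for every i. Then for every i, Σ_{j≠i} M_ij² = M_ii (1 − M_ii) < M_ii². Consequently the Hadamard square M∘M, the N×N matrix with entries M_ij², is strictly diagonally dominant and hence invertible. -/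
open Matrix Finset

theorem isUnit_of_sum_row_lt_diag {K n : Type*} [NormedField K] [Fintype n] [DecidableEq n]
    {A : Matrix n n K} (h : ∀ i, ∑ j ∈ univ.erase i, ‖A i j‖ < ‖A i i‖) : IsUnit A :=
  (isUnit_iff_isUnit_det A).mpr (det_ne_zero_of_sum_row_lt_diag h).isUnit

theorem mul_one_sub_lt_sq {K : Type*} [Field K] [LinearOrder K] [IsStrictOrderedRing K] {x : K}
    (hx : 1 / 2 < x) : x * (1 - x) < x ^ 2 := by
  have hpos : 0 < x := one_half_pos.trans hx
  have hlt : 1 - x < x := by linarith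
  simpa only [sq] using mul_lt_mul_of_pos_left hlt hpos

section RCLike

variable {𝕜 n : Type*} [RCLike 𝕜] [Fintype n]

theorem mul_conjTranspose_apply_self {m : Type*} (A : Matrix m n 𝕜) (i : m) :
    (A * Aᴴ) i i = ((∑ j, ‖A i j‖ ^ 2 : ℝ) : 𝕜) := by
  simp only [mul_apply, conjTranspose_apply, RCLike.star_def, RCLike.mul_conj, RCLike.ofReal_sum,
    RCLike.ofReal_pow]

variable {P : Matrix n n 𝕜}

theorem coe_sum_norm_sq_row_eq_diag (hP : IsStarProjection P) (i : n) :
    ((∑ j, ‖P i j‖ ^ 2 : ℝ) : 𝕜) = P i i := by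
  have hPP : P * Pᴴ = P := by
    rw [← star_eq_conjTranspose, hP.isSelfAdjoint.star_eq, hP.isIdempotentElem.eq]
  rw [← mul_conjTranspose_apply_self, hPP]

theorem sum_norm_sq_row_eq_re_diag (hP : IsStarProjection P) (i : n) :
    ∑ j, ‖P i j‖ ^ 2 = RCLike.re (P i i) := by
  rw [← coe_sum_norm_sq_row_eq_diag hP i, RCLike.ofReal_re]

theorem norm_diag_eq_re_diag (hP : IsStarProjection P) (i : n) :
    ‖P i i‖ = RCLike.re (P i i) := by
  rw [← sum_norm_sq_row_eq_re_diag hP i, ← coe_sum_norm_sq_row_eq_diag hP i]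
  exact RCLike.norm_of_nonneg (sum_nonneg fun j _ => sq_nonneg ‖P i j‖)

variable [DecidableEq n]

theorem sum_erase_norm_sq_row_eq (hP : IsStarProjection P) (i : n) :
    ∑ j ∈ univ.erase i, ‖P i j‖ ^ 2 = RCLike.re (P i i) * (1 - RCLike.re (P i i)) := by
  rw [sum_erase_eq_sub (mem_univ i), sum_norm_sq_row_eq_re_diag hP, norm_diag_eq_re_diag hP]
  ring

theorem sum_erase_norm_sq_row_lt (hP : IsStarProjection P) {i : n}
    (hi : 1 / 2 < RCLike.re (P i i)) :
    ∑ j ∈ univ.erase i, ‖P i j ^ 2‖ < ‖P i i ^ 2‖ := by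
  simp only [norm_pow]
  rw [sum_erase_norm_sq_row_eq hP, norm_diag_eq_re_diag hP]
  exact mul_one_sub_lt_sq hi

theorem hadamard_square_of_projection_diag_dominant_invertible_general
    (hP : IsStarProjection P) (hdiag : ∀ i, 1 / 2 < RCLike.re (P i i)) :
    (∀ i, ∑ j ∈ univ.erase i, ‖P i j‖ ^ 2 = RCLike.re (P i i) * (1 - RCLike.re (P i i))) ∧
    (∀ i, RCLike.re (P i i) * (1 - RCLike.re (P i i)) < RCLike.re (P i i) ^ 2) ∧
    (∀ i, ∑ j ∈ univ.erase i, ‖P i j ^ 2‖ < ‖P i i ^ 2‖) ∧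
    IsUnit (of fun i j => P i j ^ 2) :=
  have hdom (i : n) := sum_erase_norm_sq_row_lt hP (hdiag i)
  ⟨sum_erase_norm_sq_row_eq hP, fun i => mul_one_sub_lt_sq (hdiag i), hdom,
    isUnit_of_sum_row_lt_diag hdom⟩

end RCLike

/-- Let `M` be a symmetric idempotent `N × N` real matrix with `M i i > 1/2` for
every `i`. Then for every `i`, `∑_{j ≠ i} M i j ^ 2 = M i i * (1 - M i i) < M i i ^ 2`.
Consequently the Hadamard square `M ∘ M` (entries `M i j ^ 2`) is strictly diagonally dominant
and hence invertible. -/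
theorem hadamard_square_of_projection_diag_dominant_invertible
    (N : ℕ) (M : Matrix (Fin N) (Fin N) ℝ)
    (hMsymm : M.IsSymm) (hMidem : M * M = M)
    (hMdiag : ∀ i, 1 / 2 < M i i) :
    (∀ i, ∑ j ∈ Finset.univ.erase i, (M i j) ^ 2 = M i i * (1 - M i i)) ∧
    (∀ i, M i i * (1 - M i i) < (M i i) ^ 2) ∧
    (∀ i, ∑ j ∈ Finset.univ.erase i, |(M i j) ^ 2| < |(M i i) ^ 2|) ∧
    IsUnit (Matrix.of fun i j => (M i j) ^ 2) := by
  have hM : IsStarProjection M := ⟨hMidem, (conjTranspose_eq_transpose_of_trivial M).trans hMsymm⟩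
  simpa only [Real.norm_eq_abs, sq_abs, RCLike.re_to_real] using
    hadamard_square_of_projection_diag_dominant_invertible_general hM hMdiag
end
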